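/- (Lemma 3) The function ζ ↦ r(ζ) is real-analytic on (0,∞); for every z > 0 the boundary value a(z) := T(r(z), z) = Σ_{n,k} a_{n,k} r(z)^n z^k satisfies a(z) = 1 + r(z)(z − 1), and r(z) · exp(1 + (z−1)·r(z) + h(r(z), z)) = 1. -/

import Mathlib

open SimpleGraph

/-- A rooted tree on vertex set `Fin n`: a connected acyclic simple graph
with a distinguished root vertex. -/
structure RTree (n : ℕ) where
  adj : SimpleGraph (Fin n)
  connected : adj.Connected
  acyclic : adj.IsAcyclic
  root : Fin n

/-- `v` is a leaf of the rooted tree `t`: a vertex of degree one other than the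
root, except that in the one-vertex tree the root counts as a leaf. -/
def IsLeafV {n : ℕ} (t : RTree n) (v : Fin n) : Prop :=
  n = 1 ∨ ((t.adj.neighborSet v).ncard = 1 ∧ v ≠ t.root)

/-- The number of leaves of a rooted tree. -/
noncomputable def numLeaves {n : ℕ} (t : RTree n) : ℕ :=
  Nat.card {v : Fin n // IsLeafV t v}

/-- Root-preserving isomorphism of rooted trees. -/
def treeSetoid (n : ℕ) : Setoid (RTree n) where
  r t t' := ∃ e : t.adj ≃g t'.adj, e t.root = t'.root
  iseqv := by
    constructor
    · intro t; exact ⟨RelIso.refl _, rfl⟩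
    · rintro t t' ⟨e, he⟩
      exact ⟨e.symm, by rw [← he]; exact e.symm_apply_apply t.root⟩
    · rintro a b c ⟨e, he⟩ ⟨f, hf⟩
      exact ⟨e.trans f, by simp [RelIso.trans_apply, he, hf]⟩

/-- `aCount n k` : the number of isomorphism classes of rooted trees with `n`
vertices and exactly `k` leaves. -/
noncomputable def aCount (n k : ℕ) : ℕ :=
  Nat.card (Quotient (Setoid.comap
    (Subtype.val : {t : RTree n // numLeaves t = k} → RTree n)
    (treeSetoid n)))

/-- The real bivariate generating function `T(x,z) = Σ_{n,k} a_{n,k} x^n z^k`. -/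
noncomputable def Treal (x z : ℝ) : ℝ :=
  ∑' p : ℕ × ℕ, (aCount p.1 p.2 : ℝ) * x ^ p.1 * z ^ p.2

/-- `r(ζ)`, the radius of convergence in `x` of `T(x,ζ)` for `ζ > 0`. -/
noncomputable def rFun (ζ : ℝ) : ℝ :=
  sSup {x : ℝ | 0 < x ∧
    Summable (fun p : ℕ × ℕ => (aCount p.1 p.2 : ℝ) * x ^ p.1 * ζ ^ p.2)}

/-- The real version of `h(x,z) = Σ_{k≥2} T(x^k,z^k)/k`. -/
noncomputable def hReal (x z : ℝ) : ℝ :=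
  ∑' k : ℕ, Treal (x ^ (k + 2)) (z ^ (k + 2)) / ((k : ℝ) + 2)

/-! A rooted tree is its root together with a multiset of rooted trees. On generating functions this
gives `T = x (z - 1) + x exp (T + h)`, where `h` collects the terms of the Euler product beyond the
linear one. Conversely `T` is the least solution: if `x (z - 1) + x exp (y + h) ≤ y` for some
`y ≥ 0`, then the series converges at `(x, z)`. Put `E = T - x (z - 1) = x exp (T + h)` at
`x = r z`. If `E ≠ 1`, then `log E < E - 1`, so `y = T - log E` satisfies
`x (z - 1) + x exp (y + h) = x (z - 1) + 1 < y`; as `h` is continuous beyond the boundary, the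
inequality persists for some `x > r z`, where the series would then converge. Hence `E = 1`, which
is the boundary equation `r exp (1 + (z - 1) r + h (r, z)) = 1`. Its left-hand side is holomorphic
near the boundary and has nonzero derivative in `r` there. Since `r z` decreases and `z r z`
increases with `z`, the function `r` is continuous, and it is analytic by the implicit function
theorem. -/

section RootBranches

variable {V : Type*} {G : SimpleGraph V} {r : V}

theorem neighborSet_eq_empty_iff_card_eq_one [Finite V] (hG : G.Connected) (v : V) :
    G.neighborSet v = ∅ ↔ Nat.card V = 1 := by
  have := hG.nonempty
  constructor
  · intro h
    by_contra hV
    have : Nontrivial V := by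
      rw [← Finite.one_lt_card_iff_nontrivial]
      have := Nat.card_pos (α := V)
      omega
    obtain ⟨w, hw⟩ := hG.preconnected.exists_adj_of_nontrivial v
    exact (Set.eq_empty_iff_forall_notMem.1 h) w hw
  · intro h
    have := (Nat.card_eq_one_iff_unique.1 h).1
    exact Set.eq_empty_of_forall_notMem fun w hw ↦ hw.ne (Subsingleton.elim v w)

theorem exists_adj_reachable_induce_compl (hG : G.Connected) (r : V) (v : ({r}ᶜ : Set V)) :
    ∃ c : ({r}ᶜ : Set V), G.Adj r c ∧ (G.induce {r}ᶜ).Reachable c v := by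
  obtain ⟨v, hv⟩ := v
  have hrv := (reachable_iff_reflTransGen r v).1 (hG.preconnected r v)
  induction hrv with
  | refl => exact absurd rfl hv
  | @tail b v _ hbv ih =>
    rcases eq_or_ne b r with rfl | hb
    · exact ⟨⟨v, hv⟩, hbv, Reachable.refl _⟩
    · obtain ⟨c, hc, hcb⟩ := ih hb
      have hbv' : (G.induce {r}ᶜ).Adj ⟨b, hb⟩ ⟨v, hv⟩ := hbv
      exact ⟨c, hc, hcb.trans hbv'.reachable⟩

theorem eq_of_adj_of_reachable_induce_compl (hG : G.IsAcyclic) {c d : ({r}ᶜ : Set V)}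
    (hc : G.Adj r c) (hd : G.Adj r d) (hcd : (G.induce {r}ᶜ).Reachable c d) : c = d := by
  obtain ⟨p, hp⟩ := hcd.exists_isPath
  let incl : G.induce {r}ᶜ →g G := (Embedding.induce _).toHom
  let q : G.Walk (incl c) (incl d) := p.map incl
  have hq : q.IsPath := hp.map Subtype.val_injective
  have hr : r ∉ q.support := by
    rw [Walk.support_map, List.mem_map]
    rintro ⟨a, -, ha⟩
    exact a.2 ha
  have hdsnd : (d : V) = (Walk.cons hc q).snd :=
    hG.eq_snd_of_adj_start (hq.cons hr) hd (Walk.end_mem_support _)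
  exact Subtype.ext (hdsnd.trans (Walk.snd_cons q hc)).symm

end RootBranches

/-- Rooted trees on arbitrary finite vertex types. Unlike those of `RTree`, the vertices are not
numbered, so that trees can be cut up and glued together without relabelling. -/
structure FinRootedTree where
  Vert : Type
  [finite : Finite Vert]
  graph : SimpleGraph Vert
  connected : graph.Connected
  acyclic : graph.IsAcyclic
  root : Vert

attribute [instance] FinRootedTree.finite

namespace FinRootedTree

/-- Root-preserving isomorphism. -/
instance isoSetoid : Setoid FinRootedTree where
  r s t := ∃ e : s.graph ≃g t.graph, e s.root = t.root
  iseqv :=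
    { refl := fun _ ↦ ⟨RelIso.refl _, rfl⟩
      symm := fun ⟨e, he⟩ ↦ ⟨e.symm, e.symm_apply_eq.2 he.symm⟩
      trans := fun ⟨e, he⟩ ⟨f, hf⟩ ↦ ⟨e.trans f, (congrArg f he).trans hf⟩ }

/-- The number of vertices. -/
noncomputable def order (t : FinRootedTree) : ℕ := Nat.card t.Vert

open Classical in
/-- The degree in the planted tree, in which an extra edge hangs from the root. Cutting a rooted
tree at its root does not change the planted degrees of the other vertices. -/
noncomputable def plantedDegree (t : FinRootedTree) (v : t.Vert) : ℕ :=
  (t.graph.neighborSet v).ncard + if v = t.root then 1 else 0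

/-- The number of leaves, that is, of vertices of planted degree one. -/
noncomputable def leaves (t : FinRootedTree) : ℕ := Nat.card {v // t.plantedDegree v = 1}

variable {s t : FinRootedTree}

theorem order_pos (t : FinRootedTree) : 0 < t.order :=
  have : Nonempty t.Vert := ⟨t.root⟩
  Nat.card_pos

theorem leaves_le_order (t : FinRootedTree) : t.leaves ≤ t.order :=
  Finite.card_subtype_le _

theorem order_congr : s ≈ t → s.order = t.order
  | ⟨e, _⟩ => Nat.card_congr e.toEquiv

theorem plantedDegree_iso (e : s.graph ≃g t.graph) (he : e s.root = t.root) (v : s.Vert) :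
    t.plantedDegree (e v) = s.plantedDegree v := by
  classical
  have hcard : (s.graph.neighborSet v).ncard = (t.graph.neighborSet (e v)).ncard :=
    Nat.card_congr (e.mapNeighborSet v)
  have hroot : e v = t.root ↔ v = s.root := he ▸ e.injective.eq_iff
  exact congrArg₂ (· + ·) hcard.symm (if_congr hroot rfl rfl)

theorem leaves_congr : s ≈ t → s.leaves = t.leaves
  | ⟨e, he⟩ => Nat.card_congr <| e.toEquiv.subtypeEquiv fun v ↦
      (congrArg (· = 1) (plantedDegree_iso e he v)).symm.to_iff

theorem plantedDegree_eq_one_iff (t : FinRootedTree) (v : t.Vert) :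
    t.plantedDegree v = 1 ↔ t.order = 1 ∨ (t.graph.neighborSet v).ncard = 1 ∧ v ≠ t.root := by
  have hempty : (t.graph.neighborSet v).ncard = 0 ↔ t.order = 1 :=
    (Set.ncard_eq_zero).trans (neighborSet_eq_empty_iff_card_eq_one t.connected v)
  by_cases hv : v = t.root
  · simp [plantedDegree, hv ▸ hempty, hv]
  · have horder : t.order ≠ 1 := fun h ↦
      hv ((Nat.card_eq_one_iff_unique.1 h).1.elim _ _)
    simp [plantedDegree, hv, horder]

end FinRootedTree

namespace FinRootedTree

variable {ι κ : Type} {f : ι → FinRootedTree} {g : κ → FinRootedTree}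

/-- Adjacency in the tree that joins a new root, encoded as `none`, to the roots of the `f i`. -/
inductive GraftAdj (f : ι → FinRootedTree) :
    Option (Σ i, (f i).Vert) → Option (Σ i, (f i).Vert) → Prop
  | root_branch (i : ι) : GraftAdj f none (some ⟨i, (f i).root⟩)
  | branch_root (i : ι) : GraftAdj f (some ⟨i, (f i).root⟩) none
  | branch (i : ι) {u v : (f i).Vert} (h : (f i).graph.Adj u v) :
      GraftAdj f (some ⟨i, u⟩) (some ⟨i, v⟩)

/-- The underlying graph of `graft f`. -/
def graftGraph (f : ι → FinRootedTree) : SimpleGraph (Option (Σ i, (f i).Vert)) where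
  Adj := GraftAdj f
  symm := ⟨fun
    | _, _, .root_branch i => .branch_root i
    | _, _, .branch_root i => .root_branch i
    | _, _, .branch i h => .branch i h.symm⟩
  loopless := ⟨fun
    | _, .branch _ h => h.ne rfl⟩

theorem graftGraph_adj_none_some {i : ι} {u : (f i).Vert} :
    (graftGraph f).Adj none (some ⟨i, u⟩) ↔ u = (f i).root :=
  ⟨fun h ↦ by cases h; rfl, fun h ↦ h ▸ .root_branch i⟩

theorem graftGraph_adj_some_none {i : ι} {u : (f i).Vert} :
    (graftGraph f).Adj (some ⟨i, u⟩) none ↔ u = (f i).root :=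
  (adj_comm _ _ _).trans graftGraph_adj_none_some

theorem graftGraph_adj_some_some {i : ι} {u v : (f i).Vert} :
    (graftGraph f).Adj (some ⟨i, u⟩) (some ⟨i, v⟩) ↔ (f i).graph.Adj u v :=
  ⟨fun h ↦ by cases h; assumption, .branch i⟩

theorem fst_eq_of_graftGraph_adj {a b : Σ i, (f i).Vert}
    (h : (graftGraph f).Adj (some a) (some b)) : a.1 = b.1 := by
  cases h; rfl

/-- The inclusion of a branch into the grafted tree. -/
def branchHom (f : ι → FinRootedTree) (i : ι) : (f i).graph →g graftGraph f where
  toFun v := some ⟨i, v⟩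
  map_rel' := .branch i

theorem branchHom_injective (f : ι → FinRootedTree) (i : ι) :
    Function.Injective (branchHom f i) :=
  (Option.some_injective _).comp sigma_mk_injective

theorem graftGraph_connected (f : ι → FinRootedTree) : (graftGraph f).Connected := by
  refine connected_iff_exists_forall_reachable _ |>.2 ⟨none, ?_⟩
  rintro (_ | ⟨i, v⟩)
  · exact Reachable.refl _
  · have hroot : (graftGraph f).Adj none (some ⟨i, (f i).root⟩) := .root_branch i
    exact hroot.reachable.trans (((f i).connected.preconnected _ v).map (branchHom f i))

theorem graftGraph_card_edgeSet_le [Fintype ι] (f : ι → FinRootedTree) :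
    Nat.card (graftGraph f).edgeSet ≤ ∑ i, Nat.card (f i).graph.edgeSet + Nat.card ι := by
  let edge : (Σ i, (f i).graph.edgeSet) ⊕ ι → (graftGraph f).edgeSet :=
    Sum.elim (fun e ↦ (branchHom f e.1).mapEdgeSet e.2)
      fun i ↦ ⟨s(none, some ⟨i, (f i).root⟩), .root_branch i⟩
  have hedge : Function.Surjective edge := by
    rintro ⟨e, he⟩
    induction e using Sym2.ind with
    | _ a b =>
      have he : GraftAdj f a b := he
      cases he with
      | root_branch i => exact ⟨.inr i, rfl⟩
      | branch_root i => exact ⟨.inr i, Subtype.ext Sym2.eq_swap⟩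
      | @branch i u v h => exact ⟨.inl ⟨i, s(u, v), h⟩, rfl⟩
  simpa only [Nat.card_sum, Nat.card_sigma] using Nat.card_le_card_of_surjective edge hedge

theorem graftGraph_isAcyclic [Finite ι] (f : ι → FinRootedTree) : (graftGraph f).IsAcyclic := by
  have := Fintype.ofFinite ι
  have hconn := graftGraph_connected f
  have hbranch : ∀ i, Nat.card (f i).Vert = Nat.card (f i).graph.edgeSet + 1 := fun i ↦
    (isTree_iff_connected_and_card.1 ⟨(f i).connected, (f i).acyclic⟩).2.symm
  have hvert : Nat.card (Option (Σ i, (f i).Vert)) =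
      ∑ i, Nat.card (f i).graph.edgeSet + Nat.card ι + 1 := by
    rw [Finite.card_option, Nat.card_sigma, Finset.sum_congr rfl fun i _ ↦ hbranch i,
      Finset.sum_add_distrib]
    simp
  have hcard : Nat.card (graftGraph f).edgeSet + 1 = Nat.card (Option (Σ i, (f i).Vert)) :=
    le_antisymm (hvert ▸ Nat.succ_le_succ (graftGraph_card_edgeSet_le f))
      hconn.card_vert_le_card_edgeSet_add_one
  exact (isTree_iff_connected_and_card.2 ⟨hconn, hcard⟩).isAcyclic

/-- The rooted tree whose root is joined to the roots of the branches `f i`. -/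
def graft [Finite ι] (f : ι → FinRootedTree) : FinRootedTree where
  Vert := Option (Σ i, (f i).Vert)
  graph := graftGraph f
  connected := graftGraph_connected f
  acyclic := graftGraph_isAcyclic f
  root := none

theorem order_graft [Fintype ι] (f : ι → FinRootedTree) :
    (graft f).order = 1 + ∑ i, (f i).order := by
  change Nat.card (Option (Σ i, (f i).Vert)) = _
  rw [Finite.card_option, Nat.card_sigma, add_comm]
  rfl

theorem plantedDegree_graft_root [Finite ι] (f : ι → FinRootedTree) :
    (graft f).plantedDegree none = Nat.card ι + 1 := by
  have hinj : Function.Injective fun i ↦ (some ⟨i, (f i).root⟩ : Option (Σ i, (f i).Vert)) :=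
    fun i j h ↦ congrArg Sigma.fst (Option.some.inj h)
  have hset : (graftGraph f).neighborSet none = Set.range fun i ↦ some ⟨i, (f i).root⟩ := by
    ext (_ | ⟨i, u⟩)
    · simp
    · simp only [mem_neighborSet, graftGraph_adj_none_some, Set.mem_range, Option.some.injEq]
      refine ⟨fun h ↦ ⟨i, h ▸ rfl⟩, ?_⟩
      rintro ⟨j, hj⟩
      cases hj
      rfl
  have hcard : ((graftGraph f).neighborSet none).ncard = Nat.card ι := by
    rw [hset, ← Set.image_univ, Set.ncard_image_of_injective _ hinj, Set.ncard_univ]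
  exact congrArg₂ (· + ·) hcard (if_pos rfl)

theorem plantedDegree_graft_branch [Finite ι] (f : ι → FinRootedTree) (i : ι) (u : (f i).Vert) :
    (graft f).plantedDegree (some ⟨i, u⟩) = (f i).plantedDegree u := by
  classical
  have hset : (graftGraph f).neighborSet (some ⟨i, u⟩) =
      branchHom f i '' (f i).graph.neighborSet u ∪ if u = (f i).root then {none} else ∅ := by
    ext (_ | ⟨j, v⟩)
    · by_cases hu : u = (f i).root <;> simp [graftGraph_adj_some_none, branchHom, hu]
    · have hnone : (some ⟨j, v⟩ : Option (Σ i, (f i).Vert)) ∉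
          (if u = (f i).root then {none} else ∅ : Set (Option (Σ i, (f i).Vert))) := by
        split_ifs <;> simp
      rw [Set.mem_union, or_iff_left hnone, mem_neighborSet]
      constructor
      · intro h
        cases h with
        | branch _ h => exact ⟨_, h, rfl⟩
      · rintro ⟨w, hw, h⟩
        cases h
        exact .branch i hw
  have hdisj : Disjoint (branchHom f i '' (f i).graph.neighborSet u)
      (if u = (f i).root then {none} else ∅) := by
    split_ifs <;> simp [branchHom]
  have hcard : ((graftGraph f).neighborSet (some ⟨i, u⟩)).ncard =
      ((f i).graph.neighborSet u).ncard + if u = (f i).root then 1 else 0 := by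
    rw [hset, Set.ncard_union_eq hdisj,
      Set.ncard_image_of_injective _ (branchHom_injective f i)]
    split_ifs <;> simp
  exact (congrArg (_ + ·) (if_neg (Option.some_ne_none _))).trans hcard

open Classical in
theorem leaves_graft [Fintype ι] (f : ι → FinRootedTree) :
    (graft f).leaves = (if IsEmpty ι then 1 else 0) + ∑ i, (f i).leaves := by
  have := fun i ↦ Fintype.ofFinite (f i).Vert
  have hroot : (graft f).plantedDegree none = 1 ↔ IsEmpty ι := by
    rw [plantedDegree_graft_root, Nat.add_eq_right, Finite.card_eq_zero_iff]
  change Nat.card {v : Option (Σ i, (f i).Vert) // (graft f).plantedDegree v = 1} = _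
  simp only [leaves, Nat.card_eq_fintype_card, Fintype.card_subtype, Finset.card_filter,
    Fintype.sum_option, Fintype.sum_sigma, plantedDegree_graft_branch, hroot]

theorem graft_congr [Finite ι] [Finite κ] (σ : ι ≃ κ) (h : ∀ i, f i ≈ g (σ i)) :
    graft f ≈ graft g := by
  choose e he using h
  let E : Option (Σ i, (f i).Vert) ≃ Option (Σ k, (g k).Vert) :=
    Equiv.optionCongr (Equiv.sigmaCongr σ fun i ↦ (e i).toEquiv)
  have hroot : ∀ i u, e i u = (g (σ i)).root ↔ u = (f i).root := fun i u ↦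
    he i ▸ (e i).injective.eq_iff
  have hE : ∀ a b, (graftGraph g).Adj (E a) (E b) ↔ (graftGraph f).Adj a b := by
    rintro (_ | ⟨i, u⟩) (_ | ⟨j, v⟩)
    · exact iff_of_false (loopless _ |>.irrefl _) (loopless _ |>.irrefl _)
    · exact graftGraph_adj_none_some.trans ((hroot j v).trans graftGraph_adj_none_some.symm)
    · exact graftGraph_adj_some_none.trans ((hroot i u).trans graftGraph_adj_some_none.symm)
    · by_cases hij : i = j
      · subst hij
        exact graftGraph_adj_some_some.trans
          ((e i).map_adj_iff.trans graftGraph_adj_some_some.symm)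
      · exact iff_of_false (fun h ↦ hij (σ.injective (fst_eq_of_graftGraph_adj h)))
          fun h ↦ hij (fst_eq_of_graftGraph_adj h)
  exact ⟨⟨E, hE _ _⟩, rfl⟩

section GraftIso

variable (e : graftGraph f ≃g graftGraph g) (he : e none = none)
include he

theorem exists_branch_root_eq_of_iso (i : ι) :
    ∃ k, e (some ⟨i, (f i).root⟩) = some ⟨k, (g k).root⟩ := by
  have hadj : (graftGraph g).Adj (e none) (e (some ⟨i, (f i).root⟩)) :=
    e.map_adj_iff.2 (.root_branch i)
  rw [he] at hadj
  generalize e (some ⟨i, (f i).root⟩) = b at hadj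
  cases hadj with
  | root_branch k => exact ⟨k, rfl⟩

theorem exists_branch_vert_eq_of_iso {i : ι} {k : κ}
    (hik : e (some ⟨i, (f i).root⟩) = some ⟨k, (g k).root⟩) (v : (f i).Vert) :
    ∃ w, e (some ⟨i, v⟩) = some ⟨k, w⟩ := by
  induction (reachable_iff_reflTransGen _ v).1 ((f i).connected.preconnected (f i).root v) with
  | refl => exact ⟨_, hik⟩
  | @tail u v _ huv ih =>
    obtain ⟨w, hw⟩ := ih
    have hadj : (graftGraph g).Adj (some ⟨k, w⟩) (e (some ⟨i, v⟩)) :=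
      hw ▸ e.map_adj_iff.2 (.branch i huv)
    have hne : e (some ⟨i, v⟩) ≠ none := he ▸ e.injective.ne (Option.some_ne_none _)
    generalize e (some ⟨i, v⟩) = b at hadj hne
    cases hadj with
    | branch_root => exact absurd rfl hne
    | @branch _ _ w' _ => exact ⟨w', rfl⟩

theorem branch_equiv_of_iso {i : ι} {k : κ}
    (hik : e (some ⟨i, (f i).root⟩) = some ⟨k, (g k).root⟩) : f i ≈ g k := by
  have hsymm : e.symm none = none := e.symm_apply_eq.2 he.symm
  choose φ hφ using exists_branch_vert_eq_of_iso e he hik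
  choose ψ hψ using exists_branch_vert_eq_of_iso e.symm hsymm (e.symm_apply_eq.2 hik.symm)
  have hψφ : ∀ v, ψ (φ v) = v := fun v ↦ branchHom_injective f i <| by
    exact (hψ (φ v)).symm.trans (e.symm_apply_eq.2 (hφ v).symm)
  have hφψ : ∀ w, φ (ψ w) = w := fun w ↦ branchHom_injective g k <| by
    exact (hφ (ψ w)).symm.trans (e.eq_symm_apply.1 (hψ w).symm)
  have hadj : ∀ u v, (g k).graph.Adj (φ u) (φ v) ↔ (f i).graph.Adj u v := fun u v ↦ by
    rw [← graftGraph_adj_some_some, ← graftGraph_adj_some_some, ← hφ, ← hφ, e.map_adj_iff]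
  exact ⟨⟨⟨φ, ψ, hψφ, hφψ⟩, hadj _ _⟩, branchHom_injective g k ((hφ _).symm.trans hik)⟩

end GraftIso

theorem exists_equiv_of_graft_equiv [Finite ι] [Finite κ] (h : graft f ≈ graft g) :
    ∃ σ : ι ≃ κ, ∀ i, f i ≈ g (σ i) := by
  obtain ⟨e, he⟩ : ∃ e : graftGraph f ≃g graftGraph g, e none = none := h
  have hsymm : e.symm none = none := e.symm_apply_eq.2 he.symm
  choose σ hσ using exists_branch_root_eq_of_iso e he
  choose τ hτ using exists_branch_root_eq_of_iso e.symm hsymm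
  have hτσ : ∀ i, τ (σ i) = i := fun i ↦
    congrArg Sigma.fst (Option.some.inj ((hτ (σ i)).symm.trans (e.symm_apply_eq.2 (hσ i).symm)))
  have hστ : ∀ k, σ (τ k) = k := fun k ↦
    congrArg Sigma.fst (Option.some.inj ((hσ (τ k)).symm.trans (e.eq_symm_apply.1 (hτ k).symm)))
  exact ⟨⟨σ, τ, hτσ, hστ⟩, fun i ↦ branch_equiv_of_iso e he (hσ i)⟩

end FinRootedTree

namespace FinRootedTree

/-- What is left of a tree when its root is deleted. -/
def rootDeletion (t : FinRootedTree) : SimpleGraph ({t.root}ᶜ : Set t.Vert) :=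
  t.graph.induce {t.root}ᶜ

variable (t : FinRootedTree)

theorem existsUnique_adj_root (C : t.rootDeletion.ConnectedComponent) :
    ∃! v : C, t.graph.Adj t.root v.1.1 := by
  obtain ⟨v, hv⟩ := C.nonempty_supp
  obtain ⟨c, hc, hcv⟩ := exists_adj_reachable_induce_compl t.connected t.root v
  have hcC : c ∈ C := (ConnectedComponent.sound hcv).trans hv
  refine ⟨⟨c, hcC⟩, hc, fun d hd ↦ Subtype.ext ?_⟩
  exact eq_of_adj_of_reachable_induce_compl t.acyclic hd hc (C.reachable_of_mem_supp d.2 hcC)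

/-- A component of `t.rootDeletion`, rooted at its neighbour of the deleted root. -/
noncomputable def branch (C : t.rootDeletion.ConnectedComponent) : FinRootedTree where
  Vert := C
  graph := C.toSimpleGraph
  connected := C.connected_toSimpleGraph
  acyclic := ((t.acyclic.induce _).isTree_connectedComponent C).isAcyclic
  root := (t.existsUnique_adj_root C).choose

theorem adj_root_iff_eq_branch_root (C : t.rootDeletion.ConnectedComponent) (v : C) :
    t.graph.Adj t.root v.1.1 ↔ v = (t.branch C).root :=
  ⟨fun h ↦ (t.existsUnique_adj_root C).choose_spec.2 v h,
    fun h ↦ h ▸ (t.existsUnique_adj_root C).choose_spec.1⟩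

/-- The vertices of a tree, sorted by the branches to which they belong. -/
def vertOfBranch : Option (Σ C, (t.branch C).Vert) → t.Vert
  | none => t.root
  | some ⟨_, v⟩ => v.1.1

theorem vertOfBranch_bijective : Function.Bijective t.vertOfBranch := by
  constructor
  · rintro (_ | ⟨C, ⟨v, hv⟩, rfl⟩) (_ | ⟨D, ⟨w, hw⟩, rfl⟩) h
    · rfl
    · exact absurd h.symm hw
    · exact absurd h hv
    · obtain rfl : v = w := h
      rfl
  · intro v
    by_cases hv : v = t.root
    · exact ⟨none, hv.symm⟩
    · exact ⟨some ⟨t.rootDeletion.connectedComponentMk ⟨v, hv⟩, ⟨v, hv⟩, rfl⟩, rfl⟩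

theorem adj_vertOfBranch_iff (a b : Option (Σ C, (t.branch C).Vert)) :
    t.graph.Adj (t.vertOfBranch a) (t.vertOfBranch b) ↔ (graftGraph t.branch).Adj a b := by
  rcases a with _ | ⟨C, v⟩ <;> rcases b with _ | ⟨D, w⟩
  · exact iff_of_false (loopless _ |>.irrefl _) (loopless _ |>.irrefl _)
  · exact (t.adj_root_iff_eq_branch_root D w).trans graftGraph_adj_none_some.symm
  · exact (adj_comm _ _ _).trans
      ((t.adj_root_iff_eq_branch_root C v).trans graftGraph_adj_some_none.symm)
  · constructor
    · intro h
      have h : t.rootDeletion.Adj v.1 w.1 := h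
      obtain rfl : C = D :=
        (v.2.symm.trans (ConnectedComponent.sound h.reachable)).trans w.2
      exact .branch C h
    · intro h
      obtain rfl : C = D := fst_eq_of_graftGraph_adj h
      exact graftGraph_adj_some_some.1 h

theorem graft_branch_equiv : graft t.branch ≈ t :=
  ⟨⟨Equiv.ofBijective _ t.vertOfBranch_bijective, t.adj_vertOfBranch_iff _ _⟩, rfl⟩

end FinRootedTree

theorem map_univ_val_eq_iff {ι κ α : Type*} [Fintype ι] [Fintype κ] {f : ι → α} {g : κ → α} :
    Finset.univ.val.map f = Finset.univ.val.map g ↔ ∃ σ : ι ≃ κ, ∀ i, f i = g (σ i) := by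
  classical
  constructor
  · intro h
    have hfiber : ∀ a, Nonempty ({i // f i = a} ≃ {k // g k = a}) := fun a ↦ by
      have hcount := congrArg (Multiset.count a) h
      rw [Multiset.count_map, Multiset.count_map] at hcount
      rw [← Fintype.card_eq, Fintype.card_subtype, Fintype.card_subtype]
      simpa only [eq_comm, Finset.card, Finset.filter] using hcount
    exact ⟨Equiv.ofFiberEquiv fun a ↦ (hfiber a).some, fun i ↦
      (Equiv.ofFiberEquiv_map (fun a ↦ (hfiber a).some) i).symm⟩
  · rintro ⟨σ, h⟩
    rw [show f = g ∘ σ from funext h, ← Multiset.map_map, Multiset.map_univ_val_equiv]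

/-- Unlabelled rooted trees: rooted trees up to root-preserving isomorphism. -/
abbrev UnlabelledTree := Quotient FinRootedTree.isoSetoid

namespace UnlabelledTree

/-- The number of vertices. -/
noncomputable def order : UnlabelledTree → ℕ :=
  Quotient.lift FinRootedTree.order fun _ _ ↦ FinRootedTree.order_congr

/-- The number of leaves. -/
noncomputable def leaves : UnlabelledTree → ℕ :=
  Quotient.lift FinRootedTree.leaves fun _ _ ↦ FinRootedTree.leaves_congr

/-- The tree with a given multiset of branches. The branches are indexed by positions in a list
because a multiset of trees is not itself the range of a family indexed by a type in `Type`. -/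
noncomputable def graft (s : Multiset UnlabelledTree) : UnlabelledTree :=
  ⟦FinRootedTree.graft fun i : Fin s.toList.length ↦ (s.toList.get i).out⟧

theorem order_pos (q : UnlabelledTree) : 0 < q.order :=
  Quotient.inductionOn q FinRootedTree.order_pos

theorem leaves_le_order (q : UnlabelledTree) : q.leaves ≤ q.order :=
  Quotient.inductionOn q FinRootedTree.leaves_le_order

theorem map_mk_out_toList (s : Multiset UnlabelledTree) :
    Finset.univ.val.map (fun i : Fin s.toList.length ↦
      (⟦(s.toList.get i).out⟧ : UnlabelledTree)) = s := by
  simp only [Quotient.out_eq]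
  rw [Fin.univ_val_map, List.ofFn_get, Multiset.coe_toList]

theorem graft_map_mk {ι : Type} [Fintype ι] (f : ι → FinRootedTree) :
    graft (Finset.univ.val.map fun i ↦ ⟦f i⟧) = ⟦FinRootedTree.graft f⟧ := by
  obtain ⟨σ, hσ⟩ := map_univ_val_eq_iff.1 (map_mk_out_toList (Finset.univ.val.map fun i ↦ ⟦f i⟧))
  exact Quotient.sound (FinRootedTree.graft_congr σ fun i ↦ Quotient.exact (hσ i))

theorem graft_bijective : Function.Bijective graft := by
  constructor
  · intro s t h
    obtain ⟨σ, hσ⟩ := FinRootedTree.exists_equiv_of_graft_equiv (Quotient.exact h)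
    rw [← map_mk_out_toList s, ← map_mk_out_toList t]
    exact map_univ_val_eq_iff.2 ⟨σ, fun i ↦ Quotient.sound (hσ i)⟩
  · intro q
    induction q using Quotient.inductionOn with
    | _ t =>
      have := Fintype.ofFinite t.rootDeletion.ConnectedComponent
      exact ⟨_, (graft_map_mk t.branch).trans (Quotient.sound t.graft_branch_equiv)⟩

theorem order_graft (s : Multiset UnlabelledTree) :
    (graft s).order = 1 + (s.map order).sum := by
  conv_rhs => rw [← map_mk_out_toList s, Multiset.map_map]
  exact FinRootedTree.order_graft _

open Classical in
theorem leaves_graft (s : Multiset UnlabelledTree) :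
    (graft s).leaves = (if s = 0 then 1 else 0) + (s.map leaves).sum := by
  have hempty : IsEmpty (Fin s.toList.length) ↔ s = 0 := by
    rw [← Fintype.card_eq_zero_iff, Fintype.card_fin, Multiset.length_toList,
      Multiset.card_eq_zero]
  have hsum : (s.map leaves).sum =
      ∑ i : Fin s.toList.length, (s.toList.get i).out.leaves := by
    conv_lhs => rw [← map_mk_out_toList s, Multiset.map_map]
    rfl
  rw [hsum, ← if_congr hempty rfl rfl]
  exact FinRootedTree.leaves_graft _

end UnlabelledTree

section Enumeration

/-- A tree on numbered vertices, seen as a tree on an arbitrary finite type. -/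
def RTree.toFinRootedTree {n : ℕ} (t : RTree n) : FinRootedTree where
  Vert := Fin n
  graph := t.adj
  connected := t.connected
  acyclic := t.acyclic
  root := t.root

variable {n : ℕ}

theorem RTree.order_toFinRootedTree (t : RTree n) : t.toFinRootedTree.order = n :=
  Nat.card_fin n

theorem RTree.leaves_toFinRootedTree (t : RTree n) : t.toFinRootedTree.leaves = numLeaves t :=
  Nat.card_congr <| Equiv.subtypeEquivRight fun v ↦
    (FinRootedTree.plantedDegree_eq_one_iff _ v).trans <|
      or_congr_left (by rw [t.order_toFinRootedTree])

theorem FinRootedTree.exists_toFinRootedTree_equiv (t : FinRootedTree) :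
    ∃ s : RTree t.order, s.toFinRootedTree ≈ t := by
  let e : t.Vert ≃ Fin t.order := Finite.equivFin t.Vert
  let i : t.graph ≃g t.graph.map e.toEmbedding := Iso.map e t.graph
  exact ⟨⟨_, i.connected_iff.1 t.connected, i.isAcyclic_iff.1 t.acyclic, e t.root⟩,
    Setoid.symm ⟨i, rfl⟩⟩

instance RTree.instFinite (n : ℕ) : Finite (RTree n) :=
  Finite.of_injective (fun t : RTree n ↦ (t.adj, t.root)) fun
    | ⟨_, _, _, _⟩, ⟨_, _, _, _⟩, rfl => rfl

namespace UnlabelledTree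

/-- The pair of exponents with which a tree contributes to the generating function. -/
noncomputable def bidegree (q : UnlabelledTree) : ℕ × ℕ := (q.order, q.leaves)

/-- The isomorphism classes counted by `aCount n k`. -/
abbrev NumberedClass (n k : ℕ) :=
  Quotient (Setoid.comap (Subtype.val : {t : RTree n // numLeaves t = k} → RTree n) (treeSetoid n))

/-- Forgetting the numbering of the vertices. -/
def ofNumberedClass (n k : ℕ) :
    NumberedClass n k → {q : UnlabelledTree // q.bidegree = (n, k)} :=
  Quotient.lift (fun t ↦ ⟨⟦t.1.toFinRootedTree⟧,
      Prod.ext t.1.order_toFinRootedTree (t.1.leaves_toFinRootedTree.trans t.2)⟩)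
    fun _ _ h ↦ Subtype.ext (Quotient.sound h)

theorem ofNumberedClass_bijective (n k : ℕ) : Function.Bijective (ofNumberedClass n k) := by
  constructor
  · intro a b
    induction a, b using Quotient.inductionOn₂ with
    | _ s t =>
      intro h
      have h : s.1.toFinRootedTree ≈ t.1.toFinRootedTree := Quotient.exact (congrArg Subtype.val h)
      exact Quotient.sound h
  · rintro ⟨q, hq⟩
    induction q using Quotient.inductionOn with
    | _ t =>
      obtain ⟨rfl, rfl⟩ := Prod.ext_iff.1 hq.symm
      obtain ⟨s, hs⟩ := t.exists_toFinRootedTree_equiv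
      have hleaves : numLeaves s = t.leaves :=
        s.leaves_toFinRootedTree.symm.trans (FinRootedTree.leaves_congr hs)
      exact ⟨⟦⟨s, hleaves⟩⟧, Subtype.ext (Quotient.sound hs)⟩

instance finite_bidegree_fiber (p : ℕ × ℕ) : Finite {q : UnlabelledTree // q.bidegree = p} :=
  Finite.of_surjective _ (ofNumberedClass_bijective p.1 p.2).surjective

theorem aCount_eq_card (p : ℕ × ℕ) :
    aCount p.1 p.2 = Nat.card {q : UnlabelledTree // q.bidegree = p} :=
  Nat.card_eq_of_bijective _ (ofNumberedClass_bijective p.1 p.2)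

/-- The monomial which a tree contributes to the generating function. -/
noncomputable def weight {R : Type*} [CommSemiring R] (x z : R) (q : UnlabelledTree) : R :=
  x ^ q.order * z ^ q.leaves

theorem prod_map_weight {R : Type*} [CommSemiring R] (x z : R) (s : Multiset UnlabelledTree) :
    (s.map (weight x z)).prod = x ^ (s.map order).sum * z ^ (s.map leaves).sum := by
  induction s using Multiset.induction with
  | empty => simp
  | cons q s ih =>
    simp only [Multiset.map_cons, Multiset.prod_cons, Multiset.sum_cons, pow_add, ih, weight]
    ring

open Classical in
theorem weight_graft {R : Type*} [CommRing R] (x z : R) (s : Multiset UnlabelledTree) :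
    weight x z (graft s) =
      x * (s.map (weight x z)).prod + if s = 0 then x * (z - 1) else 0 := by
  rw [weight, order_graft, leaves_graft, prod_map_weight]
  split_ifs with hs
  · simp only [hs, Multiset.map_zero, Multiset.sum_zero, add_zero, pow_zero, pow_one]
    ring
  · ring

variable {x z : ℝ}

theorem weight_nonneg (hx : 0 ≤ x) (hz : 0 ≤ z) (q : UnlabelledTree) : 0 ≤ weight x z q :=
  mul_nonneg (pow_nonneg hx _) (pow_nonneg hz _)

theorem tsum_weight_bidegree_fiber (x z : ℝ) (p : ℕ × ℕ) :
    ∑' q : {q : UnlabelledTree // q.bidegree = p}, weight x z q.1 =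
      (aCount p.1 p.2 : ℝ) * x ^ p.1 * z ^ p.2 := by
  have hconst (q : {q : UnlabelledTree // q.bidegree = p}) :
      weight x z q.1 = x ^ p.1 * z ^ p.2 := by
    obtain ⟨q, rfl⟩ := q
    rfl
  rw [tsum_congr hconst, tsum_const, aCount_eq_card, nsmul_eq_mul, mul_assoc]

theorem summable_aCount_iff_summable_weight (hx : 0 ≤ x) (hz : 0 ≤ z) :
    (Summable fun p : ℕ × ℕ ↦ (aCount p.1 p.2 : ℝ) * x ^ p.1 * z ^ p.2) ↔
      Summable (weight x z) := by
  have hsigma := summable_sigma_of_nonneg (f := weight x z ∘ Equiv.sigmaFiberEquiv bidegree)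
    fun _ ↦ weight_nonneg hx hz _
  refine Iff.trans ?_ (hsigma.symm.trans (Equiv.sigmaFiberEquiv bidegree).summable_iff)
  refine Iff.trans ?_ (and_iff_right fun _ ↦ .of_finite).symm
  exact summable_congr fun p ↦ (tsum_weight_bidegree_fiber x z p).symm

theorem Treal_eq_tsum_weight (hx : 0 ≤ x) (hz : 0 ≤ z) : Treal x z = ∑' q, weight x z q := by
  let e := Equiv.sigmaFiberEquiv bidegree
  by_cases h : Summable (weight x z)
  · calc Treal x z
      _ = ∑' p, ∑' q : {q : UnlabelledTree // q.bidegree = p}, weight x z q.1 :=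
        tsum_congr fun p ↦ (tsum_weight_bidegree_fiber x z p).symm
      _ = ∑' c, weight x z (e c) := (Summable.tsum_sigma (e.summable_iff.2 h)).symm
      _ = ∑' q, weight x z q := e.tsum_eq _
  · rw [tsum_eq_zero_of_not_summable h]
    exact tsum_eq_zero_of_not_summable ((summable_aCount_iff_summable_weight hx hz).not.2 h)

end UnlabelledTree

end Enumeration

section MultisetEulerProduct

variable {α : Type*} {w : α → ℝ}

theorem replicate_add_bijective [DecidableEq α] {S : Finset α} {a : α} (ha : a ∉ S) :
    Function.Bijective fun p : ℕ × {s : Multiset α // ∀ b ∈ s, b ∈ S} ↦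
      (⟨Multiset.replicate p.1 a + p.2.1, fun b hb ↦ Finset.mem_insert.2 <|
        (Multiset.mem_add.1 hb).imp Multiset.eq_of_mem_replicate (p.2.2 b)⟩ :
        {s : Multiset α // ∀ b ∈ s, b ∈ insert a S}) := by
  have hcount : ∀ s : {s : Multiset α // ∀ b ∈ s, b ∈ S}, Multiset.count a s.1 = 0 := fun s ↦
    Multiset.count_eq_zero.2 fun h ↦ ha (s.2 a h)
  constructor
  · rintro ⟨m, s⟩ ⟨n, t⟩ h
    have hst : Multiset.replicate m a + s.1 = Multiset.replicate n a + t.1 :=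
      congrArg Subtype.val h
    obtain rfl : m = n := by
      simpa [hcount] using congrArg (Multiset.count a) hst
    exact Prod.ext rfl (Subtype.ext (add_left_cancel hst))
  · rintro ⟨s, hs⟩
    refine ⟨(s.count a, ⟨s.filter (· ≠ a), fun b hb ↦ ?_⟩), Subtype.ext ?_⟩
    · obtain ⟨hbs, hba⟩ := Multiset.mem_filter.1 hb
      exact (Finset.mem_insert.1 (hs b hbs)).resolve_left hba
    · change Multiset.replicate (s.count a) a + s.filter (· ≠ a) = s
      rw [← Multiset.filter_eq', Multiset.filter_add_not]

theorem hasSum_prod_map_of_forall_mem_finset (hw₀ : ∀ a, 0 ≤ w a) (hw₁ : ∀ a, w a < 1)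
    (S : Finset α) :
    HasSum (fun s : {s : Multiset α // ∀ a ∈ s, a ∈ S} ↦ (s.1.map w).prod)
      (∏ a ∈ S, (1 - w a)⁻¹) := by
  classical
  induction S using Finset.induction_on with
  | empty =>
    let _ : Unique {s : Multiset α // ∀ a ∈ s, a ∈ (∅ : Finset α)} :=
      { default := ⟨0, by simp⟩
        uniq := fun s ↦ Subtype.ext <| Multiset.eq_zero_of_forall_notMem fun a ha ↦
          Finset.notMem_empty a (s.2 a ha) }
    rw [Finset.prod_empty, ← Multiset.prod_zero, ← Multiset.map_zero w]
    exact hasSum_unique fun s : {s : Multiset α // ∀ a ∈ s, a ∈ (∅ : Finset α)} ↦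
      (s.1.map w).prod
  | insert a S ha ih =>
    rw [Finset.prod_insert ha, ← (Equiv.ofBijective _ (replicate_add_bijective ha)).hasSum_iff]
    have hgeom := hasSum_geometric_of_lt_one (hw₀ a) (hw₁ a)
    have hprod : ∀ s : Multiset α, 0 ≤ (s.map w).prod := fun s ↦
      Multiset.prod_nonneg (by simpa using fun a _ ↦ hw₀ a)
    have hmul := hgeom.summable.mul_of_nonneg ih.summable (fun n ↦ pow_nonneg (hw₀ a) n)
      fun s ↦ hprod s.1
    have hpair := hgeom.mul ih hmul
    refine hpair.congr_fun fun p ↦ ?_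
    simp

theorem summable_neg_log_one_sub (hw : Summable w) : Summable fun a ↦ -Real.log (1 - w a) := by
  simpa only [sub_eq_add_neg] using (Real.summable_log_one_add_of_summable hw.neg).neg

theorem prod_inv_one_sub_eq_exp (hw₁ : ∀ a, w a < 1) (S : Finset α) :
    ∏ a ∈ S, (1 - w a)⁻¹ = Real.exp (∑ a ∈ S, -Real.log (1 - w a)) := by
  simp only [Real.exp_sum, Real.exp_neg, Real.exp_log (sub_pos.2 (hw₁ _))]

theorem hasSum_prod_map_multiset (hw₀ : ∀ a, 0 ≤ w a) (hw₁ : ∀ a, w a < 1) (hw : Summable w) :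
    HasSum (fun s : Multiset α ↦ (s.map w).prod) (Real.exp (∑' a, -Real.log (1 - w a))) := by
  classical
  have hprod : ∀ s : Multiset α, 0 ≤ (s.map w).prod := fun s ↦
    Multiset.prod_nonneg (by simpa using fun a _ ↦ hw₀ a)
  have hlog : ∀ a, 0 ≤ -Real.log (1 - w a) := fun a ↦
    neg_nonneg.2 (Real.log_nonpos (sub_nonneg.2 (hw₁ a).le) (sub_le_self _ (hw₀ a)))
  have hsum := summable_neg_log_one_sub hw
  have hfin := fun S ↦
    prod_inv_one_sub_eq_exp hw₁ S ▸ hasSum_prod_map_of_forall_mem_finset hw₀ hw₁ S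
  refine hasSum_of_isLUB_of_nonneg _ hprod ⟨?_, fun b hb ↦ ?_⟩
  · rintro _ ⟨F, rfl⟩
    let S : Finset α := F.sup Multiset.toFinset
    have hFS : ∀ s ∈ F, ∀ a ∈ s, a ∈ S := fun s hs a ha ↦
      Finset.mem_sup.2 ⟨s, hs, Multiset.mem_toFinset.2 ha⟩
    calc ∑ s ∈ F, (s.map w).prod
      _ = ∑ s ∈ F.subtype fun s ↦ ∀ a ∈ s, a ∈ S, (s.1.map w).prod :=
        (Finset.sum_subtype_of_mem _ hFS).symm
      _ ≤ Real.exp (∑ a ∈ S, -Real.log (1 - w a)) :=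
        sum_le_hasSum _ (fun s _ ↦ hprod s.1) (hfin S)
      _ ≤ Real.exp (∑' a, -Real.log (1 - w a)) :=
        Real.exp_le_exp.2 (hsum.sum_le_tsum S fun a _ ↦ hlog a)
  · refine le_of_tendsto' ((Real.continuous_exp.tendsto _).comp hsum.hasSum) fun S ↦ ?_
    refine hasSum_le_of_sum_le (hfin S) fun F ↦ ?_
    exact (Finset.sum_map F (.subtype _) fun s ↦ (s.map w).prod).symm.trans_le (hb ⟨_, rfl⟩)

theorem lt_one_of_summable_prod_map (hw₀ : ∀ a, 0 ≤ w a)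
    (h : Summable fun s : Multiset α ↦ (s.map w).prod) (a : α) : w a < 1 := by
  have hgeom : Summable fun n : ℕ ↦ w a ^ n := by
    simpa [Function.comp_def] using
      h.comp_injective (i := fun n ↦ Multiset.replicate n a) (Multiset.replicate_left_injective a)
  simpa [abs_of_nonneg (hw₀ a)] using summable_geometric_iff_norm_lt_one.1 hgeom

end MultisetEulerProduct

section LogTail

/-- The power series `∑ u ^ k / k` of `-log (1 - u)` without its linear term. The function `h` is
the sum of `logTail` over the weights of all trees. -/
noncomputable def logTail (u : ℝ) : ℝ := -Real.log (1 - u) - u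

/-- The complex version of `logTail`. -/
noncomputable def clogTail (u : ℂ) : ℂ := -Complex.log (1 - u) - u

variable {u v : ℝ}

theorem neg_log_one_sub_eq (u : ℝ) : -Real.log (1 - u) = u + logTail u :=
  (add_sub_cancel _ _).symm

theorem hasSum_logTail (hu : |u| < 1) :
    HasSum (fun k : ℕ ↦ u ^ (k + 2) / ((k : ℝ) + 2)) (logTail u) := by
  have h := (hasSum_nat_add_iff' 1).2 (Real.hasSum_pow_div_log_of_abs_lt_one hu)
  simpa [logTail, add_assoc, one_add_one_eq_two] using h

theorem hasSum_clogTail {u : ℂ} (hu : ‖u‖ < 1) :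
    HasSum (fun k : ℕ ↦ u ^ (k + 2) / ((k : ℂ) + 2)) (clogTail u) := by
  have h := (hasSum_nat_add_iff' 2).2 (Complex.hasSum_taylorSeries_neg_log hu)
  simpa [clogTail, Finset.sum_range_succ] using h

theorem logTail_nonneg (hu : u < 1) : 0 ≤ logTail u := by
  have := Real.log_le_sub_one_of_pos (sub_pos.2 hu)
  rw [logTail]
  linarith

theorem logTail_mono (hu : 0 ≤ u) (huv : u ≤ v) (hv : v < 1) : logTail u ≤ logTail v := by
  have hu' : |u| < 1 := (abs_of_nonneg hu).trans_lt (huv.trans_lt hv)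
  have hv' : |v| < 1 := (abs_of_nonneg (hu.trans huv)).trans_lt hv
  refine hasSum_le (fun k ↦ ?_) (hasSum_logTail hu') (hasSum_logTail hv')
  gcongr

theorem neg_log_one_sub_le (hu : u < 1) : -Real.log (1 - u) ≤ u / (1 - u) := by
  have hpos := sub_pos.2 hu
  calc -Real.log (1 - u) = Real.log (1 - u)⁻¹ := (Real.log_inv _).symm
    _ ≤ (1 - u)⁻¹ - 1 := Real.log_le_sub_one_of_pos (inv_pos.2 hpos)
    _ = u / (1 - u) := by field_simp; ring

theorem logTail_le (hu : u < 1) : logTail u ≤ u ^ 2 / (1 - u) := by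
  have hpos := sub_pos.2 hu
  calc logTail u ≤ u / (1 - u) - u := sub_le_sub_right (neg_log_one_sub_le hu) u
    _ = u ^ 2 / (1 - u) := by field_simp; ring

theorem clogTail_ofReal (hu : u < 1) : clogTail u = logTail u := by
  rw [clogTail, logTail, ← Complex.ofReal_one, ← Complex.ofReal_sub,
    ← Complex.ofReal_log (sub_nonneg.2 hu.le)]
  push_cast
  rfl

theorem norm_clogTail_le {u : ℂ} (hu : ‖u‖ < 1) : ‖clogTail u‖ ≤ logTail ‖u‖ := by
  refine (hasSum_clogTail hu).norm_le_of_bounded (hasSum_logTail (by rwa [abs_norm])) fun k ↦ ?_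
  have hk : ‖(k : ℂ) + 2‖ = (k : ℝ) + 2 := by
    exact_mod_cast Complex.norm_natCast (k + 2)
  rw [norm_div, norm_pow, hk]

theorem contDiffAt_clogTail {u : ℂ} (hu : ‖u‖ < 1) {n : WithTop ℕ∞} :
    ContDiffAt ℂ n clogTail u := by
  have hslit : 1 - u ∈ Complex.slitPlane :=
    sub_eq_add_neg 1 u ▸ Complex.mem_slitPlane_of_norm_lt_one (by rwa [norm_neg])
  have hsub : ContDiffAt ℂ n (fun w : ℂ ↦ 1 - w) u := by fun_prop
  exact ((Complex.contDiffAt_log hslit).comp u hsub).neg.sub contDiffAt_id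

end LogTail

section Analysis

open Filter Topology

variable {ι E : Type*} [NormedAddCommGroup E] [NormedSpace ℂ E] {f : ι → E → ℂ} {u : ι → ℝ}
  {U : Set E} {p : E}

theorem continuousAt_of_antitoneOn_of_monotoneOn_mul {f : ℝ → ℝ} {a : ℝ}
    (hf : AntitoneOn f (Set.Ioi 0)) (hmul : MonotoneOn (fun x ↦ x * f x) (Set.Ioi 0))
    (ha : 0 < a) : ContinuousAt f a := by
  have hdiv : Tendsto (fun y ↦ a * f a / y) (𝓝 a) (𝓝 (f a)) := by
    have h : ContinuousAt (fun y ↦ a * f a / y) a := by fun_prop (disch := exact ha.ne')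
    simpa [ContinuousAt, mul_div_cancel_left₀ _ ha.ne'] using h
  have hmin := (tendsto_const_nhds (x := f a)).min hdiv
  have hmax := (tendsto_const_nhds (x := f a)).max hdiv
  rw [min_self] at hmin
  rw [max_self] at hmax
  refine tendsto_of_tendsto_of_tendsto_of_le_of_le' hmin hmax ?_ ?_ <;>
    filter_upwards [Ioi_mem_nhds ha] with y (hy : 0 < y)
  all_goals rcases le_total a y with hay | hya
  · exact min_le_of_right_le ((div_le_iff₀' hy).2 (hmul ha hy hay))
  · exact min_le_of_left_le (hf hy ha hya)
  · exact le_max_of_le_left (hf ha hy hay)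
  · exact le_max_of_le_right ((le_div_iff₀' hy).2 (hmul hy ha hya))

theorem norm_fderiv_le_of_norm_le_on_ball {f : E → ℂ} {R M : ℝ} (hR : 0 < R)
    (hf : DifferentiableOn ℂ f (Metric.ball p R)) (hM : ∀ w ∈ Metric.ball p R, ‖f w‖ ≤ M) :
    ‖fderiv ℂ f p‖ ≤ 2 * M / R := by
  refine Complex.norm_fderiv_le_div_of_mapsTo_ball hf (fun w hw ↦ ?_) hR
  have hp := hM p (Metric.mem_ball_self hR)
  rw [mem_closedBall_iff_norm, two_mul]
  exact norm_sub_le_of_le (hM w hw) hp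

theorem contDiffAt_one_tsum_of_norm_le (hU : IsOpen U) (hu : Summable u)
    (hf : ∀ i, ContDiffOn ℂ 1 (f i) U) (hfu : ∀ i, ∀ w ∈ U, ‖f i w‖ ≤ u i) (hp : p ∈ U) :
    ContDiffAt ℂ 1 (fun w ↦ ∑' i, f i w) p := by
  obtain ⟨R, hR, hball⟩ := Metric.isOpen_iff.1 hU p hp
  let B := Metric.ball p (R / 2)
  have hBU : B ⊆ U := (Metric.ball_subset_ball (half_le_self hR.le)).trans hball
  have hsub (w) (hw : w ∈ B) : Metric.ball w (R / 2) ⊆ U := by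
    refine (Metric.ball_subset_ball' ?_).trans hball
    linarith [Metric.mem_ball.1 hw]
  have hderiv (i) (w) (hw : w ∈ B) : HasFDerivAt (f i) (fderiv ℂ (f i) w) w :=
    (((hf i).contDiffAt (hU.mem_nhds (hBU hw))).differentiableAt one_ne_zero).hasFDerivAt
  have hbound (i) (w) (hw : w ∈ B) : ‖fderiv ℂ (f i) w‖ ≤ 2 * u i / (R / 2) :=
    norm_fderiv_le_of_norm_le_on_ball (half_pos hR)
      (((hf i).differentiableOn one_ne_zero).mono (hsub w hw)) fun v hv ↦ hfu i v (hsub w hw hv)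
  have hsum := (hu.mul_left 2).div_const (R / 2)
  refine contDiffAt_one_iff.2 ⟨fun w ↦ ∑' i, fderiv ℂ (f i) w, B,
    Metric.ball_mem_nhds p (half_pos hR), continuousOn_tsum (fun i ↦ ?_) hsum hbound, fun w hw ↦ ?_⟩
  · exact ((hf i).continuousOn_fderiv_of_isOpen hU le_rfl).mono hBU
  · exact hasFDerivAt_tsum_of_isPreconnected hsum Metric.isOpen_ball
      (Metric.isPreconnected_ball) hderiv hbound
      (Metric.mem_ball_self (half_pos hR)) (.of_norm_bounded hu fun i ↦ hfu i p hp) hw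

theorem re_nonneg_of_hasDerivAt_of_monotoneOn {f : ℂ → ℂ} {g : ℝ → ℝ} {f' : ℂ} {s : Set ℝ} {a : ℝ}
    (hf : HasDerivAt f f' a) (hs : s ∈ 𝓝 a) (hg : MonotoneOn g s) (hfg : ∀ x ∈ s, f x = g x) :
    0 ≤ f'.re := by
  have hgf : HasDerivAt g f'.re a := hf.real_of_complex.congr_of_eventuallyEq <| by
    filter_upwards [hs] with x hx
    rw [hfg x hx, Complex.ofReal_re]
  rw [← hgf.deriv, ← derivWithin_of_mem_nhds hs]
  exact hg.derivWithin_nonneg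

theorem analyticAt_of_contDiffAt_of_eventually_eq {G : ℂ × ℂ → ℂ} {G' : ℂ} {f : ℝ → ℝ} {a : ℝ}
    (hG : ContDiffAt ℂ 1 G (a, f a)) (hG' : HasDerivAt (fun w ↦ G (a, w)) G' (f a)) (hne : G' ≠ 0)
    (hf : ContinuousAt f a) (heq : ∀ᶠ x : ℝ in 𝓝 a, G (x, f x) = G (a, f a)) :
    AnalyticAt ℝ f a := by
  have hinv : (fderiv ℂ G (a, f a) ∘L .inr ℂ ℂ ℂ).IsInvertible := by
    have hderiv : fderiv ℂ G (a, f a) (0, 1) = G' :=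
      ((hG.differentiableAt one_ne_zero).hasFDerivAt.comp_hasDerivAt (f a : ℂ)
        ((hasDerivAt_const _ (a : ℂ)).prodMk (hasDerivAt_id _))).unique hG'
    refine ⟨ContinuousLinearEquiv.unitsEquivAut ℂ (Units.mk0 _ hne), ?_⟩
    ext
    simp [hderiv]
  let ψ := hG.implicitFunction one_ne_zero hinv
  have hψ : AnalyticAt ℂ ψ a := by
    rw [Complex.analyticAt_iff_eventually_differentiableAt]
    have hsmooth := hG.contDiffAt_implicitFunction one_ne_zero hinv
    filter_upwards [hsmooth.eventually (by simp)] with y hy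
    exact hy.differentiableAt one_ne_zero
  have hgraph : Tendsto (fun x : ℝ ↦ ((x : ℂ), (f x : ℂ))) (𝓝 a) (𝓝 ((a : ℂ), (f a : ℂ))) :=
    ContinuousAt.prodMk (by fun_prop) (by fun_prop)
  have hψf : (fun x : ℝ ↦ (ψ x).re) =ᶠ[𝓝 a] f := by
    filter_upwards [heq,
      hgraph.eventually (hG.eventually_apply_eq_iff_implicitFunction one_ne_zero hinv)]
      with x hx hiff
    exact congrArg Complex.re (hiff.1 hx)
  have hψ_real : AnalyticAt ℝ (fun x : ℝ ↦ ψ x) a :=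
    hψ.restrictScalars.fun_comp (Complex.ofRealCLM.analyticAt a)
  exact ((Complex.reCLM.analyticAt _).fun_comp hψ_real).congr hψf

end Analysis

namespace UnlabelledTree

/-- The generating function `T (x, z)`, as a sum over trees. -/
noncomputable def treeSum (x z : ℝ) : ℝ := ∑' q, weight x z q

/-- The function `h (x, z)`, as a sum over trees. -/
noncomputable def tailSum (x z : ℝ) : ℝ := ∑' q, logTail (weight x z q)

/-- The convergence of `tailSum x z`. On its domain every weight is less than one. -/
def TailSummable (x z : ℝ) : Prop :=
  (∀ q, weight x z q < 1) ∧ Summable fun q ↦ logTail (weight x z q)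

section FunctionalEquation

variable {x z : ℝ}

theorem hasSum_mul_prod_map_weight (h : Summable (weight x z)) :
    HasSum (fun s : Multiset UnlabelledTree ↦ x * (s.map (weight x z)).prod)
      (treeSum x z - x * (z - 1)) := by
  classical
  have hgraft := (Equiv.ofBijective graft graft_bijective).hasSum_iff.2 h.hasSum
  refine (hgraft.sub (hasSum_ite_eq (0 : Multiset UnlabelledTree) (x * (z - 1)))).congr_fun
    fun s ↦ ?_
  rw [Function.comp_apply, Equiv.ofBijective_apply, weight_graft, add_sub_cancel_right]

theorem weight_lt_one (hx : 0 < x) (hz : 0 ≤ z) (h : Summable (weight x z)) (q : UnlabelledTree) :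
    weight x z q < 1 :=
  lt_one_of_summable_prod_map (weight_nonneg hx.le hz)
    ((summable_mul_left_iff hx.ne').1 (hasSum_mul_prod_map_weight h).summable) q

theorem tailSummable_of_summable_weight (hx : 0 < x) (hz : 0 ≤ z) (h : Summable (weight x z)) :
    TailSummable x z :=
  ⟨weight_lt_one hx hz h, (summable_neg_log_one_sub h).sub h⟩

theorem treeSum_sub_eq_mul_exp (hx : 0 < x) (hz : 0 ≤ z) (h : Summable (weight x z)) :
    treeSum x z - x * (z - 1) = x * Real.exp (treeSum x z + tailSum x z) := by
  obtain ⟨hlt, htail⟩ := tailSummable_of_summable_weight hx hz h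
  have hlog : ∑' q, -Real.log (1 - weight x z q) = treeSum x z + tailSum x z := by
    simp only [neg_log_one_sub_eq]
    exact h.tsum_add htail
  have hprod := hasSum_prod_map_multiset (weight_nonneg hx.le hz) hlt h
  exact (hasSum_mul_prod_map_weight h).unique (hlog ▸ hprod.mul_left x)

end FunctionalEquation

section Supersolution

open Classical in
/-- The weights of the trees with at most `N` vertices. By induction on `N`, their sum stays below
every supersolution of the functional equation. -/
noncomputable def truncatedWeight (x z : ℝ) (N : ℕ) (q : UnlabelledTree) : ℝ :=
  if q.order ≤ N then weight x z q else 0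

variable {x z C y : ℝ} {g : UnlabelledTree → ℝ}

theorem truncatedWeight_nonneg (hx : 0 ≤ x) (hz : 0 ≤ z) (N : ℕ) (q : UnlabelledTree) :
    0 ≤ truncatedWeight x z N q := by
  rw [truncatedWeight]
  split_ifs
  exacts [weight_nonneg hx hz q, le_rfl]

open Classical in
theorem truncatedWeight_succ_graft_le (hx : 0 ≤ x) (hz : 0 ≤ z) (N : ℕ)
    (s : Multiset UnlabelledTree) :
    truncatedWeight x z (N + 1) (graft s) ≤
      x * (s.map (truncatedWeight x z N)).prod + if s = 0 then x * (z - 1) else 0 := by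
  rw [truncatedWeight]
  split_ifs with horder hs hs
  · simp [weight_graft, hs]
  · have hle : ∀ q ∈ s, q.order ≤ N := fun q hq ↦ by
      have := Multiset.le_sum_of_mem (Multiset.mem_map_of_mem order hq)
      rw [order_graft] at horder
      omega
    have hmap : s.map (weight x z) = s.map (truncatedWeight x z N) :=
      Multiset.map_congr rfl fun q hq ↦ (if_pos (hle q hq)).symm
    simp [weight_graft, hs, hmap]
  · simp only [hs, Multiset.map_zero, Multiset.prod_zero]
    nlinarith
  · have hprod : 0 ≤ (s.map (truncatedWeight x z N)).prod :=
      Multiset.prod_nonneg (by simpa using fun q _ ↦ truncatedWeight_nonneg hx hz N q)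
    simpa using mul_nonneg hx hprod

-- The bound `C * w + g` is exact for `C = 1` and `g = logTail ∘ w`. For small `x` the cruder choice
-- `C = 2` and `g = 0` applies, and it shows that the series converges somewhere.
theorem exp_tsum_truncatedWeight_le (hC : 0 ≤ C)
    (hlog : ∀ q, -Real.log (1 - weight x z q) ≤ C * weight x z q + g q)
    (hg₀ : ∀ q, 0 ≤ g q) (hg : Summable g) {N : ℕ} (hN : Summable (truncatedWeight x z N))
    (hNy : ∑' q, truncatedWeight x z N q ≤ y) :
    Real.exp (∑' q, -Real.log (1 - truncatedWeight x z N q)) ≤ Real.exp (C * y + ∑' q, g q) := by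
  have hlogN (q : UnlabelledTree) :
      -Real.log (1 - truncatedWeight x z N q) ≤ C * truncatedWeight x z N q + g q := by
    rw [truncatedWeight]
    split_ifs
    · exact hlog q
    · simpa using hg₀ q
  refine Real.exp_le_exp.2 ?_
  calc ∑' q, -Real.log (1 - truncatedWeight x z N q)
    _ ≤ ∑' q, (C * truncatedWeight x z N q + g q) :=
      (summable_neg_log_one_sub hN).tsum_le_tsum hlogN ((hN.mul_left C).add hg)
    _ = C * ∑' q, truncatedWeight x z N q + ∑' q, g q := by
      rw [(hN.mul_left C).tsum_add hg, tsum_mul_left]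
    _ ≤ C * y + ∑' q, g q := by gcongr

theorem summable_truncatedWeight_and_tsum_le (hx : 0 ≤ x) (hz : 0 ≤ z) (hC : 0 ≤ C)
    (hlt : ∀ q, weight x z q < 1)
    (hlog : ∀ q, -Real.log (1 - weight x z q) ≤ C * weight x z q + g q)
    (hg₀ : ∀ q, 0 ≤ g q) (hg : Summable g) (hy : 0 ≤ y)
    (hsuper : x * Real.exp (C * y + ∑' q, g q) + x * (z - 1) ≤ y) (N : ℕ) :
    Summable (truncatedWeight x z N) ∧ ∑' q, truncatedWeight x z N q ≤ y := by
  classical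
  induction N with
  | zero =>
    have hzero : truncatedWeight x z 0 = 0 :=
      funext fun q ↦ if_neg (Nat.not_le.2 (order_pos q))
    simpa [hzero] using ⟨summable_zero, hy⟩
  | succ N ih =>
    obtain ⟨hN, hNy⟩ := ih
    have hlt' : ∀ q, truncatedWeight x z N q < 1 := fun q ↦ by
      rw [truncatedWeight]
      split_ifs
      exacts [hlt q, one_pos]
    have heuler := ((hasSum_prod_map_multiset (truncatedWeight_nonneg hx hz N) hlt' hN).mul_left
      x).add (hasSum_ite_eq (0 : Multiset UnlabelledTree) (x * (z - 1)))
    have hsum : Summable fun s ↦ truncatedWeight x z (N + 1) (graft s) :=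
      .of_nonneg_of_le (fun s ↦ truncatedWeight_nonneg hx hz _ _)
        (truncatedWeight_succ_graft_le hx hz N) heuler.summable
    have hle := hasSum_le (truncatedWeight_succ_graft_le hx hz N) hsum.hasSum heuler
    let e := Equiv.ofBijective graft graft_bijective
    refine ⟨e.summable_iff.1 hsum, (e.tsum_eq _).symm.trans_le (hle.trans ?_)⟩
    grw [exp_tsum_truncatedWeight_le hC hlog hg₀ hg hN hNy]
    exact hsuper

theorem summable_weight_of_supersolution (hx : 0 ≤ x) (hz : 0 ≤ z) (hC : 0 ≤ C)
    (hlt : ∀ q, weight x z q < 1)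
    (hlog : ∀ q, -Real.log (1 - weight x z q) ≤ C * weight x z q + g q)
    (hg₀ : ∀ q, 0 ≤ g q) (hg : Summable g) (hy : 0 ≤ y)
    (hsuper : x * Real.exp (C * y + ∑' q, g q) + x * (z - 1) ≤ y) :
    Summable (weight x z) := by
  refine summable_of_sum_le (weight_nonneg hx hz) (c := y) fun F ↦ ?_
  let N := F.sup order
  obtain ⟨hsum, hle⟩ := summable_truncatedWeight_and_tsum_le hx hz hC hlt hlog hg₀ hg hy hsuper N
  calc ∑ q ∈ F, weight x z q
    _ = ∑ q ∈ F, truncatedWeight x z N q :=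
      Finset.sum_congr rfl fun q hq ↦ (if_pos (Finset.le_sup hq)).symm
    _ ≤ ∑' q, truncatedWeight x z N q :=
      hsum.sum_le_tsum F fun q _ ↦ truncatedWeight_nonneg hx hz N q
    _ ≤ y := hle

theorem TailSummable.summable_weight (h : TailSummable x z) (hx : 0 ≤ x) (hz : 0 ≤ z) (hy : 0 ≤ y)
    (hsuper : x * Real.exp (y + tailSum x z) + x * (z - 1) ≤ y) : Summable (weight x z) :=
  summable_weight_of_supersolution hx hz zero_le_one h.1
    (fun q ↦ (neg_log_one_sub_eq _).trans (by rw [one_mul]) |>.le)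
    (fun q ↦ logTail_nonneg (h.1 q)) h.2 hy (by rwa [one_mul])

end Supersolution

section Radius

open Filter Topology

variable {x x' z z' : ℝ}

theorem weight_graft_zero (x z : ℝ) : weight x z (graft 0) = x * z := by
  classical
  rw [weight_graft, if_pos rfl, Multiset.map_zero, Multiset.prod_zero]
  ring

theorem weight_mono (hx : 0 ≤ x) (hz : 0 ≤ z) (hxx' : x ≤ x') (hzz' : z ≤ z')
    (q : UnlabelledTree) : weight x z q ≤ weight x' z' q := by
  have hx' := hx.trans hxx'
  rw [weight, weight]
  gcongr

theorem weight_le_pow_order (hx : 0 ≤ x) (hz : 0 ≤ z) (q : UnlabelledTree) :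
    weight x z q ≤ (x * max 1 z) ^ q.order := by
  calc x ^ q.order * z ^ q.leaves
    _ ≤ x ^ q.order * max 1 z ^ q.leaves := by gcongr; exact le_max_right _ _
    _ ≤ x ^ q.order * max 1 z ^ q.order := by
      gcongr
      exacts [le_max_left _ _, q.leaves_le_order]
    _ = (x * max 1 z) ^ q.order := (mul_pow _ _ _).symm

theorem TailSummable.mono (h : TailSummable x' z') (hx : 0 ≤ x) (hz : 0 ≤ z) (hxx' : x ≤ x')
    (hzz' : z ≤ z') : TailSummable x z := by
  have hle := weight_mono hx hz hxx' hzz'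
  have hlt : ∀ q, weight x z q < 1 := fun q ↦ (hle q).trans_lt (h.1 q)
  exact ⟨hlt, .of_nonneg_of_le (fun q ↦ logTail_nonneg (hlt q))
    (fun q ↦ logTail_mono (weight_nonneg hx hz q) (hle q) (h.1 q)) h.2⟩

theorem tailSum_nonneg (h : TailSummable x z) : 0 ≤ tailSum x z :=
  tsum_nonneg fun q ↦ logTail_nonneg (h.1 q)

theorem mul_le_treeSum (hx : 0 ≤ x) (hz : 0 ≤ z) (h : Summable (weight x z)) :
    x * z ≤ treeSum x z :=
  weight_graft_zero x z ▸ h.le_tsum (graft 0) fun q _ ↦ weight_nonneg hx hz q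

theorem mul_exp_treeSum_le (hx : 0 < x) (hz : 0 ≤ z) (h : Summable (weight x z)) :
    x * Real.exp (treeSum x z) ≤ treeSum x z - x * (z - 1) := by
  rw [treeSum_sub_eq_mul_exp hx hz h]
  gcongr
  exact le_add_of_nonneg_right (tailSum_nonneg (tailSummable_of_summable_weight hx hz h))

theorem lt_one_of_summable_weight (hx : 0 < x) (hz : 0 < z) (h : Summable (weight x z)) :
    x < 1 := by
  have hT : 0 < x * z := mul_pos hx hz
  nlinarith [mul_exp_treeSum_le hx hz.le h, mul_le_treeSum hx.le hz.le h,
    Real.add_one_le_exp (treeSum x z)]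

theorem treeSum_le_two_div (hx : 0 < x) (hz : 0 < z) (h : Summable (weight x z)) :
    treeSum x z ≤ 2 / x := by
  have hT : 0 < treeSum x z := (mul_pos hx hz).trans_le (mul_le_treeSum hx.le hz.le h)
  have hexp := mul_exp_treeSum_le hx hz.le h
  have hquad : x * (1 + treeSum x z + treeSum x z ^ 2 / 2) ≤ x * Real.exp (treeSum x z) := by
    gcongr
    exact Real.quadratic_le_exp_of_nonneg hT.le
  rw [le_div_iff₀ hx]
  nlinarith [mul_pos hx hz, mul_pos hx hT]

theorem mul_max_one_lt_one (hx : 0 < x) (hz : 0 < z) (h : Summable (weight x z)) :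
    x * max 1 z < 1 := by
  rw [mul_max_of_nonneg _ _ hx.le, mul_one]
  exact max_lt (lt_one_of_summable_weight hx hz h)
    (weight_graft_zero x z ▸ weight_lt_one hx hz.le h (graft 0))

theorem exists_summable_weight (hz : 0 < z) : ∃ x, 0 < x ∧ Summable (weight x z) := by
  obtain ⟨x, hx⟩ : ∃ x : ℝ, x = 1 / (2 * (z + 2)) := ⟨_, rfl⟩
  have hx₀ : 0 < x := by rw [hx]; positivity
  have hxz : x * (z + 2) = 1 / 2 := by rw [hx]; field_simp
  have hmax : x * max 1 z ≤ 1 / 2 := by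
    rw [← hxz]
    gcongr
    exact max_le (by linarith) (by linarith)
  have hweight : ∀ q, weight x z q ≤ 1 / 2 := fun q ↦
    (weight_le_pow_order hx₀.le hz.le q).trans
      ((pow_le_of_le_one (by positivity) (by linarith) q.order_pos.ne').trans hmax)
  have hlog : ∀ q, -Real.log (1 - weight x z q) ≤ 2 * weight x z q + 0 := fun q ↦ by
    have hle := hweight q
    refine (neg_log_one_sub_le (by linarith)).trans ?_
    rw [div_le_iff₀ (by linarith)]
    nlinarith [weight_nonneg hx₀.le hz.le q]
  refine ⟨x, hx₀, summable_weight_of_supersolution hx₀.le hz.le zero_le_two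
    (fun q ↦ (hweight q).trans_lt one_half_lt_one) hlog (fun _ ↦ le_rfl) summable_zero
    one_half_pos.le ?_⟩
  rw [tsum_zero, add_zero, mul_one_div_cancel two_ne_zero]
  nlinarith [Real.exp_one_lt_three]

theorem isLUB_rFun (hz : 0 < z) : IsLUB {x | 0 < x ∧ Summable (weight x z)} (rFun z) := by
  have hset : {x : ℝ | 0 < x ∧
        Summable fun p : ℕ × ℕ ↦ (aCount p.1 p.2 : ℝ) * x ^ p.1 * z ^ p.2} =
      {x | 0 < x ∧ Summable (weight x z)} :=
    Set.ext fun x ↦ and_congr_right fun hx ↦ summable_aCount_iff_summable_weight hx.le hz.le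
  rw [rFun, hset]
  exact isLUB_csSup (exists_summable_weight hz)
    ⟨1, fun x hx ↦ (lt_one_of_summable_weight hx.1 hz hx.2).le⟩

theorem rFun_pos (hz : 0 < z) : 0 < rFun z := by
  obtain ⟨x, hx⟩ := exists_summable_weight hz
  exact hx.1.trans_le ((isLUB_rFun hz).1 hx)

theorem le_rFun (hx : 0 < x) (hz : 0 < z) (h : Summable (weight x z)) : x ≤ rFun z :=
  (isLUB_rFun hz).1 ⟨hx, h⟩

theorem summable_weight_rFun (hz : 0 < z) : Summable (weight (rFun z) z) := by
  have hr := rFun_pos hz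
  refine summable_of_sum_le (weight_nonneg hr.le hz.le) (c := 2 / rFun z) fun F ↦ ?_
  have hsum : ContinuousAt (fun x ↦ ∑ q ∈ F, weight x z q) (rFun z) := by
    unfold weight
    fun_prop
  have hbound : ContinuousAt (fun x : ℝ ↦ 2 / x) (rFun z) := by fun_prop (disch := exact hr.ne')
  refine le_of_tendsto_of_tendsto_of_frequently (hsum.mono_left inf_le_left)
    (hbound.mono_left inf_le_left)
    (((isLUB_rFun hz).frequently_mem (exists_summable_weight hz)).mono fun x hx ↦ ?_)
  obtain ⟨hx, hs⟩ := hx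
  exact (hs.sum_le_tsum F fun q _ ↦ weight_nonneg hx.le hz.le q).trans
    (treeSum_le_two_div hx hz hs)

theorem weight_mul_mul_le {c : ℝ} (hc : 1 ≤ c) (hx : 0 ≤ x) (hz : 0 ≤ z) (q : UnlabelledTree) :
    weight (c * x) (c * z) q ≤ (c ^ 2) ^ q.order * weight x z q := by
  calc weight (c * x) (c * z) q
    _ = c ^ q.order * c ^ q.leaves * weight x z q := by rw [weight, weight]; ring
    _ ≤ c ^ q.order * c ^ q.order * weight x z q := by
      have := weight_nonneg hx hz q
      gcongr
      exact q.leaves_le_order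
    _ = (c ^ 2) ^ q.order * weight x z q := by ring

theorem sq_weight_mul_mul_le {c : ℝ} (hc : 1 ≤ c) (hx : 0 ≤ x) (hz : 0 ≤ z)
    (hcm : c ^ 4 * (x * max 1 z) ≤ 1) (q : UnlabelledTree) :
    weight (c * x) (c * z) q ^ 2 ≤ weight x z q := by
  have hw := weight_nonneg hx hz q
  calc weight (c * x) (c * z) q ^ 2
    _ ≤ ((c ^ 2) ^ q.order * weight x z q) ^ 2 := by
      gcongr
      exacts [weight_nonneg (by positivity) (by positivity) q, weight_mul_mul_le hc hx hz q]
    _ = (c ^ 4) ^ q.order * weight x z q * weight x z q := by ring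
    _ ≤ (c ^ 4) ^ q.order * (x * max 1 z) ^ q.order * weight x z q := by
      gcongr
      exact weight_le_pow_order hx hz q
    _ = (c ^ 4 * (x * max 1 z)) ^ q.order * weight x z q := by rw [mul_pow (c ^ 4)]
    _ ≤ weight x z q := mul_le_of_le_one_left hw (pow_le_one₀ (by positivity) hcm)

-- The sum for `h` converges beyond the boundary because `logTail` is quadratic at zero, and the
-- squares of slightly enlarged weights are still below the weights themselves.
theorem exists_one_lt_tailSummable (hx : 0 < x) (hz : 0 < z) (h : Summable (weight x z)) :
    ∃ c, 1 < c ∧ TailSummable (c * x) (c * z) := by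
  have hm := mul_max_one_lt_one hx hz h
  obtain ⟨c, hc, hcm⟩ : ∃ c : ℝ, 1 < c ∧ c ^ 4 * (x * max 1 z) < 1 := by
    have hlim : ∀ᶠ c : ℝ in 𝓝 1, c ^ 4 * (x * max 1 z) < 1 :=
      ContinuousAt.eventually_lt (by fun_prop) (by fun_prop) (by simpa using hm)
    have hright : ∀ᶠ c : ℝ in 𝓝[>] 1, 1 < c := self_mem_nhdsWithin
    exact (hright.and (hlim.filter_mono nhdsWithin_le_nhds)).exists
  have hsq := sq_weight_mul_mul_le hc.le hx.le hz.le hcm.le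
  have hsqrt : √(x * max 1 z) < 1 := (Real.sqrt_lt' one_pos).2 (by rwa [one_pow])
  have hle (q : UnlabelledTree) : weight (c * x) (c * z) q ≤ √(x * max 1 z) :=
    Real.le_sqrt_of_sq_le <| (hsq q).trans <| (weight_le_pow_order hx.le hz.le q).trans <|
      pow_le_of_le_one (by positivity) hm.le q.order_pos.ne'
  have hlt (q : UnlabelledTree) : weight (c * x) (c * z) q < 1 := (hle q).trans_lt hsqrt
  refine ⟨c, hc, hlt, (h.div_const (1 - √(x * max 1 z))).of_nonneg_of_le
    (fun q ↦ logTail_nonneg (hlt q)) fun q ↦ (logTail_le (hlt q)).trans ?_⟩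
  have := sub_pos.2 hsqrt
  gcongr
  exacts [weight_nonneg hx.le hz.le q, hsq q, hle q]

theorem rFun_antitoneOn : AntitoneOn rFun (Set.Ioi 0) := fun _ hz _ hz' hzz' ↦
  le_rFun (rFun_pos hz') hz <| (summable_weight_rFun hz').of_nonneg_of_le
    (weight_nonneg (rFun_pos hz').le (le_of_lt hz))
    (weight_mono (rFun_pos hz').le (le_of_lt hz) le_rfl hzz')

theorem weight_div_mul_le {c : ℝ} (hc : 1 ≤ c) (hx : 0 ≤ x) (hz : 0 ≤ z) (q : UnlabelledTree) :
    weight (x / c) (c * z) q ≤ weight x z q := by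
  have hc₀ : 0 < c := one_pos.trans_le hc
  calc weight (x / c) (c * z) q
    _ = c ^ q.leaves / c ^ q.order * weight x z q := by rw [weight, weight]; ring
    _ ≤ weight x z q := mul_le_of_le_one_left (weight_nonneg hx hz q)
      ((div_le_one (pow_pos hc₀ _)).2 (pow_le_pow_right₀ hc q.leaves_le_order))

theorem mul_rFun_monotoneOn : MonotoneOn (fun z ↦ z * rFun z) (Set.Ioi 0) := by
  intro z (hz : 0 < z) z' (hz' : 0 < z') hzz'
  have hr := rFun_pos hz
  have hc : 1 ≤ z' / z := (one_le_div hz).2 hzz'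
  have hscale := weight_div_mul_le hc hr.le hz.le
  rw [div_mul_cancel₀ _ hz.ne'] at hscale
  have hle : rFun z / (z' / z) ≤ rFun z' := by
    refine le_rFun (by positivity) hz' ((summable_weight_rFun hz).of_nonneg_of_le ?_ hscale)
    exact weight_nonneg (by positivity) hz'.le
  rw [div_div_eq_mul_div, div_le_iff₀ hz'] at hle
  linarith

theorem continuousAt_rFun (hz : 0 < z) : ContinuousAt rFun z :=
  continuousAt_of_antitoneOn_of_monotoneOn_mul rFun_antitoneOn mul_rFun_monotoneOn hz

end Radius

section ComplexTailSum

open Filter Topology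

variable {x z X Z : ℝ}

/-- The complex version of `tailSum`, as a function of the pair `(z, x)`: the implicit function
theorem solves for the second coordinate. -/
noncomputable def ctailSum (p : ℂ × ℂ) : ℂ := ∑' q, clogTail (weight p.2 p.1 q)

theorem norm_weight (x z : ℂ) (q : UnlabelledTree) : ‖weight x z q‖ = weight ‖x‖ ‖z‖ q := by
  rw [weight, weight, norm_mul, norm_pow, norm_pow]

theorem ctailSum_ofReal (h : TailSummable x z) : ctailSum (z, x) = tailSum x z := by
  rw [tailSum, Complex.ofReal_tsum]
  refine tsum_congr fun q ↦ ?_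
  rw [← clogTail_ofReal (h.1 q)]
  simp only [weight, Complex.ofReal_mul, Complex.ofReal_pow]

theorem contDiffAt_ctailSum (h : TailSummable X Z) {p : ℂ × ℂ} (hz : ‖p.1‖ < Z) (hx : ‖p.2‖ < X) :
    ContDiffAt ℂ 1 ctailSum p := by
  let U : Set (ℂ × ℂ) := {w | ‖w.1‖ < Z ∧ ‖w.2‖ < X}
  have hU : IsOpen U :=
    (isOpen_lt continuous_fst.norm continuous_const).inter
      (isOpen_lt continuous_snd.norm continuous_const)
  have hle (q : UnlabelledTree) (w) (hw : w ∈ U) : ‖weight w.2 w.1 q‖ ≤ weight X Z q := by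
    rw [norm_weight]
    exact weight_mono (norm_nonneg _) (norm_nonneg _) hw.2.le hw.1.le q
  have hlt (q : UnlabelledTree) (w) (hw : w ∈ U) : ‖weight w.2 w.1 q‖ < 1 :=
    (hle q w hw).trans_lt (h.1 q)
  refine contDiffAt_one_tsum_of_norm_le hU h.2 (fun q w hw ↦ ?_) (fun q w hw ↦ ?_) ⟨hz, hx⟩
  · have hweight : ContDiffAt ℂ 1 (fun w : ℂ × ℂ ↦ weight w.2 w.1 q) w := by
      unfold weight
      fun_prop
    exact ((contDiffAt_clogTail (hlt q w hw)).comp w hweight).contDiffWithinAt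
  · exact (norm_clogTail_le (hlt q w hw)).trans
      (logTail_mono (norm_nonneg _) (hle q w hw) (h.1 q))

theorem contDiffAt_ctailSum_ofReal (h : TailSummable X Z) (hx : 0 ≤ x) (hz : 0 ≤ z) (hxX : x < X)
    (hzZ : z < Z) : ContDiffAt ℂ 1 ctailSum ((z : ℂ), (x : ℂ)) :=
  contDiffAt_ctailSum h (by simpa [abs_of_nonneg hz]) (by simpa [abs_of_nonneg hx])

theorem continuousAt_tailSum (h : TailSummable X Z) (hx : 0 < x) (hz : 0 ≤ z) (hxX : x < X)
    (hzZ : z < Z) : ContinuousAt (fun x ↦ tailSum x z) x := by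
  have hc := (contDiffAt_ctailSum_ofReal h hx.le hz hxX hzZ).continuousAt
  have hre : ContinuousAt (fun x : ℝ ↦ (ctailSum (z, x)).re) x :=
    Complex.continuous_re.continuousAt.comp
      (hc.comp_of_eq (f := fun x : ℝ ↦ ((z : ℂ), (x : ℂ))) (by fun_prop) rfl)
  refine hre.congr ?_
  filter_upwards [Ioo_mem_nhds hx hxX] with x' hx'
  rw [ctailSum_ofReal (h.mono hx'.1.le hz hx'.2.le hzZ.le), Complex.ofReal_re]

theorem exists_hasDerivAt_ctailSum_re_nonneg (h : TailSummable X Z) (hx : 0 < x) (hz : 0 ≤ z)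
    (hxX : x < X) (hzZ : z < Z) :
    ∃ D : ℂ, HasDerivAt (fun w ↦ ctailSum (z, w)) D x ∧ 0 ≤ D.re := by
  have hdiff : DifferentiableAt ℂ (fun w ↦ ctailSum (z, w)) x :=
    ((contDiffAt_ctailSum_ofReal h hx.le hz hxX hzZ).differentiableAt one_ne_zero).comp (x : ℂ)
      (f := fun w ↦ ((z : ℂ), w)) (by fun_prop)
  have hsummable (x') (hx' : x' ∈ Set.Ioo 0 X) : TailSummable x' z :=
    h.mono hx'.1.le hz hx'.2.le hzZ.le
  have hmono : MonotoneOn (fun x ↦ tailSum x z) (Set.Ioo 0 X) := fun x₁ h₁ x₂ h₂ h₁₂ ↦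
    (hsummable x₁ h₁).2.tsum_le_tsum (fun q ↦ logTail_mono (weight_nonneg h₁.1.le hz q)
      (weight_mono h₁.1.le hz h₁₂ le_rfl q) ((hsummable x₂ h₂).1 q)) (hsummable x₂ h₂).2
  exact ⟨_, hdiff.hasDerivAt, re_nonneg_of_hasDerivAt_of_monotoneOn hdiff.hasDerivAt
    (Ioo_mem_nhds hx hxX) hmono fun x' hx' ↦ ctailSum_ofReal (hsummable x' hx')⟩

theorem hReal_eq_tailSum (hx : 0 ≤ x) (hz : 0 ≤ z) (h : TailSummable x z) :
    hReal x z = tailSum x z := by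
  have hw := weight_nonneg hx hz
  have hlog (q : UnlabelledTree) :
      HasSum (fun k : ℕ ↦ weight x z q ^ (k + 2) / ((k : ℝ) + 2)) (logTail (weight x z q)) :=
    hasSum_logTail ((abs_of_nonneg (hw q)).trans_lt (h.1 q))
  have hsum : Summable fun p : UnlabelledTree × ℕ ↦ weight x z p.1 ^ (p.2 + 2) / ((p.2 : ℝ) + 2) :=
    (summable_prod_of_nonneg fun p ↦ div_nonneg (pow_nonneg (hw p.1) _) (by positivity)).2
      ⟨fun q ↦ (hlog q).summable, h.2.congr fun q ↦ (hlog q).tsum_eq.symm⟩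
  calc hReal x z
    _ = ∑' (k : ℕ) (q : UnlabelledTree), weight x z q ^ (k + 2) / ((k : ℝ) + 2) := by
      refine tsum_congr fun k ↦ ?_
      rw [Treal_eq_tsum_weight (pow_nonneg hx _) (pow_nonneg hz _), tsum_div_const]
      simp only [weight, mul_pow, pow_right_comm]
    _ = ∑' (q : UnlabelledTree) (k : ℕ), weight x z q ^ (k + 2) / ((k : ℝ) + 2) :=
      Summable.tsum_comm hsum
    _ = tailSum x z := tsum_congr fun q ↦ (hlog q).tsum_eq

end ComplexTailSum

section Boundary

open Filter Topology

variable {z : ℝ}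

theorem exists_tailSummable_gt (hz : 0 < z) :
    ∃ X Z, rFun z < X ∧ z < Z ∧ TailSummable X Z := by
  have hr := rFun_pos hz
  obtain ⟨c, hc, h⟩ := exists_one_lt_tailSummable hr hz (summable_weight_rFun hz)
  exact ⟨c * rFun z, c * z, lt_mul_of_one_lt_left hr hc, lt_mul_of_one_lt_left hz hc, h⟩

theorem tailSummable_rFun (hz : 0 < z) : TailSummable (rFun z) z :=
  tailSummable_of_summable_weight (rFun_pos hz) hz.le (summable_weight_rFun hz)

theorem le_mul_exp_add_tailSum_rFun (hz : 0 < z) {y : ℝ} (hy : 0 ≤ y) :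
    y ≤ rFun z * Real.exp (y + tailSum (rFun z) z) + rFun z * (z - 1) := by
  by_contra! hlt
  have hr := rFun_pos hz
  obtain ⟨X, Z, hX, hZ, h⟩ := exists_tailSummable_gt hz
  have htail := continuousAt_tailSum h hr hz.le hX hZ
  have hnear : ∀ᶠ x in 𝓝 (rFun z), x * Real.exp (y + tailSum x z) + x * (z - 1) < y :=
    ContinuousAt.eventually_lt
      (f := fun x ↦ x * Real.exp (y + tailSum x z) + x * (z - 1))
      (by fun_prop) continuousAt_const hlt
  obtain ⟨x, hsuper, hrx, hxX⟩ :=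
    ((hnear.filter_mono nhdsWithin_le_nhds).and (Ioo_mem_nhdsGT hX)).exists
  have hx := hr.trans hrx
  exact hrx.not_ge <| le_rFun hx hz <|
    (h.mono hx.le hz.le hxX.le hZ.le).summable_weight hx.le hz.le hy hsuper.le

theorem treeSum_rFun (hz : 0 < z) : treeSum (rFun z) z = 1 + rFun z * (z - 1) := by
  have hr := rFun_pos hz
  have hs := summable_weight_rFun hz
  obtain ⟨E, hE⟩ : ∃ E, E = treeSum (rFun z) z - rFun z * (z - 1) := ⟨_, rfl⟩
  have hE_exp : E = rFun z * Real.exp (treeSum (rFun z) z + tailSum (rFun z) z) :=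
    hE.trans (treeSum_sub_eq_mul_exp hr hz.le hs)
  have hE_pos : 0 < E := hE_exp ▸ by positivity
  suffices E = 1 by linarith
  by_contra hne
  have hlog := Real.log_lt_sub_one_of_pos hE_pos hne
  have hexp : rFun z * Real.exp (treeSum (rFun z) z - Real.log E + tailSum (rFun z) z) = 1 := by
    rw [sub_add_eq_add_sub, Real.exp_sub, Real.exp_log hE_pos, ← mul_div_assoc, ← hE_exp,
      div_self hE_pos.ne']
  have hnonneg : 0 ≤ treeSum (rFun z) z - Real.log E := by
    nlinarith [lt_one_of_summable_weight hr hz hs]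
  have hle := le_mul_exp_add_tailSum_rFun hz hnonneg
  rw [hexp] at hle
  linarith

theorem rFun_mul_exp_eq_one (hz : 0 < z) :
    rFun z * Real.exp (1 + (z - 1) * rFun z + tailSum (rFun z) z) = 1 := by
  have h := treeSum_sub_eq_mul_exp (rFun_pos hz) hz.le (summable_weight_rFun hz)
  rw [treeSum_rFun hz] at h
  rw [mul_comm (z - 1) (rFun z)]
  linarith

/-- The left-hand side of the equation of the curve `x = r (z)`, as a function of `(z, x)`. -/
noncomputable def boundaryFun (p : ℂ × ℂ) : ℂ :=
  p.2 * Complex.exp (1 + (p.1 - 1) * p.2 + ctailSum p)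

theorem boundaryFun_rFun (hz : 0 < z) : boundaryFun (z, rFun z) = 1 := by
  simp only [boundaryFun, ctailSum_ofReal (tailSummable_rFun hz)]
  exact_mod_cast rFun_mul_exp_eq_one hz

theorem exists_hasDerivAt_boundaryFun_ne_zero (hz : 0 < z) :
    ∃ G' : ℂ, HasDerivAt (fun w ↦ boundaryFun (z, w)) G' (rFun z) ∧ G' ≠ 0 := by
  have hr := rFun_pos hz
  obtain ⟨X, Z, hX, hZ, h⟩ := exists_tailSummable_gt hz
  obtain ⟨D, hD, hD_re⟩ := exists_hasDerivAt_ctailSum_re_nonneg h hr hz.le hX hZ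
  have hexponent : HasDerivAt (fun w ↦ 1 + ((z : ℂ) - 1) * w + ctailSum (z, w)) (z - 1 + D)
      (rFun z) :=
    ((hasDerivAt_const_mul _).const_add 1).add hD
  have hderiv := (hasDerivAt_id (rFun z : ℂ)).mul hexponent.cexp
  have hre : 0 < (1 + rFun z * ((z - 1) + D) : ℂ).re := by
    have hpos : 0 < 1 + rFun z * (z - 1) := by
      nlinarith [lt_one_of_summable_weight hr hz (summable_weight_rFun hz)]
    have := mul_nonneg hr.le hD_re
    simp only [Complex.add_re, Complex.one_re, Complex.re_ofReal_mul, Complex.sub_re,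
      Complex.ofReal_re]
    linarith
  have hne : (1 + rFun z * ((z - 1) + D) : ℂ) ≠ 0 := fun h0 ↦ hre.ne' (by rw [h0, Complex.zero_re])
  refine ⟨_, hderiv.congr_deriv ?_, mul_ne_zero
    (Complex.exp_ne_zero (1 + (z - 1) * rFun z + ctailSum (z, rFun z))) hne⟩
  simp only [id]
  ring

theorem analyticAt_rFun (hz : 0 < z) : AnalyticAt ℝ rFun z := by
  obtain ⟨X, Z, hX, hZ, h⟩ := exists_tailSummable_gt hz
  have htail := contDiffAt_ctailSum_ofReal h (rFun_pos hz).le hz.le hX hZ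
  have hcont : ContDiffAt ℂ 1 boundaryFun (z, rFun z) := by
    unfold boundaryFun
    fun_prop
  obtain ⟨G', hG', hne⟩ := exists_hasDerivAt_boundaryFun_ne_zero hz
  refine analyticAt_of_contDiffAt_of_eventually_eq hcont hG' hne (continuousAt_rFun hz) ?_
  filter_upwards [Ioi_mem_nhds hz] with y hy
  rw [boundaryFun_rFun hy, boundaryFun_rFun hz]

end Boundary

end UnlabelledTree

/-- Lemma 3: `r` is real-analytic on `(0,∞)`, and for `z > 0` the boundary
value `a(z) = T(r(z),z)` satisfies `a(z) = 1 + r(z)(z−1)` and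
`r(z)·exp(1 + (z−1)r(z) + h(r(z),z)) = 1`. -/
theorem lemma3 :
    (∀ ζ : ℝ, 0 < ζ → AnalyticAt ℝ rFun ζ) ∧
    (∀ z : ℝ, 0 < z →
      Treal (rFun z) z = 1 + rFun z * (z - 1) ∧
      rFun z * Real.exp (1 + (z - 1) * rFun z + hReal (rFun z) z) = 1) := by
  refine ⟨fun ζ hζ ↦ UnlabelledTree.analyticAt_rFun hζ, fun z hz ↦ ⟨?_, ?_⟩⟩
  · rw [UnlabelledTree.Treal_eq_tsum_weight (UnlabelledTree.rFun_pos hz).le hz.le]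
    exact UnlabelledTree.treeSum_rFun hz
  · rw [UnlabelledTree.hReal_eq_tailSum (UnlabelledTree.rFun_pos hz).le hz.le
      (UnlabelledTree.tailSummable_rFun hz)]
    exact UnlabelledTree.rFun_mul_exp_eq_one hz
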